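/- For every nonnegative integer g, the number of numerical semigroups with multiplicity 5 and genus g is at most the number of numerical semigroups with multiplicity 5 and genus g+1; that is, #S(5,g) ≤ #S(5,g+1). -/

import Mathlib

/-- A numerical semigroup: a subset of ℕ containing 0, closed under addition,
with finite complement. -/
def IsNumericalSemigroup (S : Set ℕ) : Prop :=
  0 ∈ S ∧ (∀ a ∈ S, ∀ b ∈ S, a + b ∈ S) ∧ Sᶜ.Finite

/-- The genus: the number of gaps of `S`. -/
noncomputable def nsGenus (S : Set ℕ) : ℕ := Sᶜ.ncard

/-- The Frobenius number: the largest gap of `S`. -/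
noncomputable def nsFrobenius (S : Set ℕ) : ℕ := sSup Sᶜ

/-- The multiplicity: the least positive element of `S`. -/
noncomputable def nsMultiplicity (S : Set ℕ) : ℕ := sInf {n | n ∈ S ∧ n ≠ 0}

/-- A minimal generator: a nonzero element of `S` that is not a sum of two
nonzero elements of `S`. -/
def IsMinimalGenerator (S : Set ℕ) (n : ℕ) : Prop :=
  n ∈ S ∧ n ≠ 0 ∧ ¬ ∃ a b, a ∈ S ∧ b ∈ S ∧ a ≠ 0 ∧ b ≠ 0 ∧ a + b = n

/-- The embedding dimension: the number of minimal generators of `S`. -/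
noncomputable def nsEmbDim (S : Set ℕ) : ℕ := {n | IsMinimalGenerator S n}.ncard

/-- The number of numerical semigroups with multiplicity `m` and genus `g`. -/
noncomputable def numSgps (m g : ℕ) : ℕ :=
  {S : Set ℕ | IsNumericalSemigroup S ∧ nsMultiplicity S = m ∧ nsGenus S = g}.ncard

/-!
A numerical semigroup of multiplicity `m` is determined by its Kunz coordinates, and its genus is
their sum, so `#S(m, g)` counts the lattice points of a slice of a polyhedron. For `m = 5` the slice
for `g` injects into the slice for `g + 1`. Raising `k 4` is an injection wherever it is possible;
it fails only on the facets `k 4 = k 1 + k 3` and `k 4 = 2 * k 2`. Multiplying the indices by `2`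
turns the first into `k 2 = k 3 + k 4`, and multiplying them by `3` turns the second into
`k 3 = 2 * k 4`. The corresponding Kunz inequalities involve a carry modulo `5`, which leaves room
to raise the sum by one while keeping `k 2 = k 3 + k 4 + 1` or `2 * k 4 ≤ k 3`. At such points `k 4`
cannot be lowered, so they are not images of the first kind.
-/

/-- Kunz coordinates of a numerical semigroup of multiplicity `m`: for each residue `i` modulo `m`,
`m * k i + i` is the least element of the semigroup congruent to `i`. The quotient in `add_le` is
the carry in the sum of the residues `i` and `j`. -/
structure IsKunz {m : ℕ} [NeZero m] (k : Fin m → ℕ) : Prop where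
  zero : k 0 = 0
  pos : ∀ i ≠ 0, 0 < k i
  add_le : ∀ i j, k (i + j) ≤ k i + k j + ((i : ℕ) + j) / m

/-- The lattice points of the slice of the Kunz polyhedron on which the coordinates sum to `g`. -/
def kunzPoints (m g : ℕ) [NeZero m] : Set (Fin m → ℕ) :=
  {k | IsKunz k ∧ ∑ i, k i = g}

/-- The set of naturals with prescribed Kunz coordinates `k`: it contains `m * q + i`, where
`i < m`, exactly when `k i ≤ q`. -/
def kunzSet {m : ℕ} [NeZero m] (k : Fin m → ℕ) : Set ℕ :=
  {n | k (Fin.ofNat m n) ≤ n / m}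

/-- The Kunz coordinates of `S` relative to `m`. If `S` contains no element congruent to `i`
modulo `m`, the coordinate at `i` is the junk value `0`. -/
noncomputable def kunzCoord (m : ℕ) (S : Set ℕ) (i : Fin m) : ℕ :=
  sInf {q | m * q + i ∈ S}

theorem nsMultiplicity_eq_iff_isLeast {S : Set ℕ} {m : ℕ} [NeZero m] :
    nsMultiplicity S = m ↔ IsLeast {n | n ∈ S ∧ n ≠ 0} m := by
  refine ⟨?_, IsLeast.csInf_eq⟩
  rintro rfl
  have hne : {n | n ∈ S ∧ n ≠ 0}.Nonempty :=
    Nat.nonempty_of_pos_sInf (NeZero.pos (nsMultiplicity S))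
  exact ⟨Nat.sInf_mem hne, fun _ hn => Nat.sInf_le hn⟩

theorem IsNumericalSemigroup.mul_add_mem_iff {S : Set ℕ} (hS : IsNumericalSemigroup S) {m : ℕ}
    [NeZero m] (hm : m ∈ S) (i : Fin m) (q : ℕ) : m * q + i ∈ S ↔ kunzCoord m S i ≤ q := by
  obtain ⟨-, hadd, hfin⟩ := hS
  have hne : {q | m * q + i ∈ S}.Nonempty := by
    by_contra! hempty
    have hinj : Function.Injective (m * · + (i : ℕ)) :=
      (add_left_injective (i : ℕ)).comp (mul_right_injective₀ (NeZero.ne m))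
    exact Set.infinite_of_injective_forall_mem hinj (Set.eq_empty_iff_forall_notMem.mp hempty) hfin
  have hup : ∀ p q, p ≤ q → p ∈ {q | m * q + i ∈ S} → q ∈ {q | m * q + i ∈ S} := by
    intro p q hpq hp
    induction q, hpq using Nat.le_induction with
    | base => exact hp
    | succ q _ ih =>
      simpa only [Set.mem_ofPred_eq, mul_add_one, add_right_comm] using hadd _ ih _ hm
  exact Set.ext_iff.mp (Nat.eq_Ici_of_nonempty_of_upward_closed hne hup) q

section KunzSet

variable {m : ℕ} [NeZero m] {k : Fin m → ℕ}

theorem mul_add_mem_kunzSet {i : Fin m} {q : ℕ} : m * q + i ∈ kunzSet k ↔ k i ≤ q := by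
  have hres : Fin.ofNat m (m * q + i) = i := by
    ext
    simp [Nat.mod_eq_of_lt i.isLt]
  have hquot : (m * q + i) / m = q := by
    rw [Nat.mul_add_div (NeZero.pos m), Nat.div_eq_of_lt i.isLt, add_zero]
  rw [kunzSet, Set.mem_ofPred_eq, hres, hquot]

theorem kunzCoord_kunzSet (k : Fin m → ℕ) : kunzCoord m (kunzSet k) = k := by
  ext i
  simp only [kunzCoord, mul_add_mem_kunzSet]
  exact csInf_Ici

theorem kunzSet_injective : Function.Injective (kunzSet : (Fin m → ℕ) → Set ℕ) :=
  Function.LeftInverse.injective kunzCoord_kunzSet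

theorem IsNumericalSemigroup.kunzSet_kunzCoord {S : Set ℕ} (hS : IsNumericalSemigroup S)
    (hm : m ∈ S) : kunzSet (kunzCoord m S) = S := by
  ext n
  have hmem := hS.mul_add_mem_iff hm (Fin.ofNat m n) (n / m)
  rw [Fin.val_ofNat, Nat.div_add_mod] at hmem
  exact hmem.symm

theorem compl_kunzSet (k : Fin m → ℕ) :
    (kunzSet k)ᶜ =
      ((Finset.univ.sigma fun i => Finset.range (k i)).image fun p => m * p.2 + (p.1 : ℕ) :
        Finset ℕ) := by
  ext n
  simp only [Set.mem_compl_iff, Finset.coe_image, Set.mem_image, Finset.mem_coe, Finset.mem_sigma,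
    Finset.mem_univ, true_and, Finset.mem_range]
  constructor
  · intro hn
    exact ⟨⟨Fin.ofNat m n, n / m⟩, not_le.mp hn, Nat.div_add_mod n m⟩
  · rintro ⟨⟨i, q⟩, hq, rfl⟩
    rwa [mul_add_mem_kunzSet, not_le]

theorem finite_compl_kunzSet (k : Fin m → ℕ) : (kunzSet k)ᶜ.Finite := by
  rw [compl_kunzSet]
  exact Finset.finite_toSet _

theorem nsGenus_kunzSet (k : Fin m → ℕ) : nsGenus (kunzSet k) = ∑ i, k i := by
  have hinj : Function.Injective fun p : (_ : Fin m) × ℕ => m * p.2 + (p.1 : ℕ) := by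
    rintro ⟨i, p⟩ ⟨j, q⟩ h
    have hij : i = j := Fin.ext <| by
      simpa [Nat.mod_eq_of_lt i.isLt, Nat.mod_eq_of_lt j.isLt] using congrArg (· % m) h
    subst hij
    simpa [NeZero.ne m] using h
  rw [nsGenus, compl_kunzSet, Set.ncard_coe_finset, Finset.card_image_of_injective _ hinj]
  simp only [Finset.card_sigma, Finset.card_range]

theorem zero_mem_kunzSet : 0 ∈ kunzSet k ↔ k 0 = 0 := by
  simpa using mul_add_mem_kunzSet (k := k) (i := 0) (q := 0)

theorem forall_add_mem_kunzSet_iff :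
    (∀ a ∈ kunzSet k, ∀ b ∈ kunzSet k, a + b ∈ kunzSet k) ↔
      ∀ i j : Fin m, k (i + j) ≤ k i + k j + ((i : ℕ) + j) / m := by
  have hcarry (i j : Fin m) (p q : ℕ) : (m * p + i) + (m * q + j) =
      m * (p + q + ((i : ℕ) + j) / m) + (i + j : Fin m) := by
    rw [Fin.val_add]
    linarith [Nat.div_add_mod ((i : ℕ) + j) m]
  constructor
  · intro h i j
    have hsum := h _ (mul_add_mem_kunzSet.mpr (le_refl (k i))) _
      (mul_add_mem_kunzSet.mpr (le_refl (k j)))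
    rwa [hcarry, mul_add_mem_kunzSet] at hsum
  · intro h a ha b hb
    have hab := hcarry (Fin.ofNat m a) (Fin.ofNat m b) (a / m) (b / m)
    simp only [Fin.val_ofNat, Nat.div_add_mod] at hab
    rw [hab, mul_add_mem_kunzSet]
    exact (h _ _).trans (Nat.add_le_add_right (Nat.add_le_add ha hb) _)

theorem nsMultiplicity_kunzSet_eq_iff (h0 : k 0 = 0) :
    nsMultiplicity (kunzSet k) = m ↔ ∀ i ≠ 0, 0 < k i := by
  rw [nsMultiplicity_eq_iff_isLeast]
  constructor
  · intro h i hi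
    by_contra! hki
    have hmem : (i : ℕ) ∈ kunzSet k := by simpa using mul_add_mem_kunzSet (q := 0).mpr hki
    exact i.isLt.not_ge (h.2 ⟨hmem, Fin.val_ne_zero_iff.mpr hi⟩)
  · intro h
    refine ⟨⟨?_, NeZero.ne m⟩, ?_⟩
    · simpa [h0] using mul_add_mem_kunzSet (k := k) (i := 0) (q := 1)
    · rintro n ⟨hn, hn0⟩
      by_contra! hnm
      have hpos := h ⟨n, hnm⟩ (Fin.ne_of_val_ne (by simpa using hn0))
      have hzero : k ⟨n, hnm⟩ ≤ 0 := mul_add_mem_kunzSet.mp (by simpa using hn)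
      omega

theorem isKunz_iff :
    IsKunz k ↔ IsNumericalSemigroup (kunzSet k) ∧ nsMultiplicity (kunzSet k) = m := by
  constructor
  · intro hk
    exact ⟨⟨zero_mem_kunzSet.mpr hk.zero, forall_add_mem_kunzSet_iff.mpr hk.add_le,
      finite_compl_kunzSet k⟩, (nsMultiplicity_kunzSet_eq_iff hk.zero).mpr hk.pos⟩
  · rintro ⟨⟨hzero, hadd, -⟩, hmult⟩
    have h0 := zero_mem_kunzSet.mp hzero
    exact ⟨h0, (nsMultiplicity_kunzSet_eq_iff h0).mp hmult, forall_add_mem_kunzSet_iff.mp hadd⟩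

end KunzSet

theorem numSgps_eq_ncard_kunzPoints (m g : ℕ) [NeZero m] :
    numSgps m g = (kunzPoints m g).ncard := by
  rw [numSgps, ← Set.ncard_image_of_injective _ kunzSet_injective]
  congr 1
  ext S
  constructor
  · rintro ⟨hS, hmult, hgenus⟩
    have hm : m ∈ S := (nsMultiplicity_eq_iff_isLeast.mp hmult).1.1
    have hSk : kunzSet (kunzCoord m S) = S := hS.kunzSet_kunzCoord hm
    refine ⟨kunzCoord m S, ⟨isKunz_iff.mpr ?_, ?_⟩, hSk⟩
    · rw [hSk]
      exact ⟨hS, hmult⟩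
    · rw [← nsGenus_kunzSet, hSk, hgenus]
  · rintro ⟨k, ⟨hk, hsum⟩, rfl⟩
    obtain ⟨hS, hmult⟩ := isKunz_iff.mp hk
    exact ⟨hS, hmult, (nsGenus_kunzSet k).trans hsum⟩

theorem finite_kunzPoints (m g : ℕ) [NeZero m] : (kunzPoints m g).Finite := by
  refine (Set.finite_Iic fun _ => g).subset ?_
  rintro k ⟨-, rfl⟩ i
  exact Finset.single_le_sum (fun _ _ => Nat.zero_le _) (Finset.mem_univ i)

theorem isKunz_five_iff {k : Fin 5 → ℕ} :
    IsKunz k ↔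
      k 0 = 0 ∧ (0 < k 1 ∧ 0 < k 2 ∧ 0 < k 3 ∧ 0 < k 4) ∧
      (k 2 ≤ 2 * k 1 ∧ k 3 ≤ k 1 + k 2 ∧ k 4 ≤ k 1 + k 3 ∧ k 4 ≤ 2 * k 2) ∧
      (k 1 ≤ k 2 + k 4 + 1 ∧ k 1 ≤ 2 * k 3 + 1 ∧ k 2 ≤ k 3 + k 4 + 1 ∧ k 3 ≤ 2 * k 4 + 1) := by
  constructor
  · rintro ⟨hzero, hpos, hadd⟩
    simp only [two_mul]
    exact ⟨hzero,
      ⟨hpos 1 (by decide), hpos 2 (by decide), hpos 3 (by decide), hpos 4 (by decide)⟩,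
      ⟨hadd 1 1, hadd 1 2, hadd 1 3, hadd 2 2⟩, ⟨hadd 2 4, hadd 3 3, hadd 3 4, hadd 4 4⟩⟩
  · rintro ⟨hzero, hpos, hnocarry, hcarry⟩
    refine ⟨hzero, fun i hi => ?_, fun i j => ?_⟩
    · fin_cases i <;> simp at hi ⊢ <;> omega
    · fin_cases i <;> fin_cases j <;> simp <;> omega

/-- An injection from the Kunz points of multiplicity `5` and genus `g` to those of genus `g + 1`.
Off the facets `k 4 = k 1 + k 3` and `k 4 = 2 * k 2` it raises `k 4`. The second branch permutes
the coordinates by `i ↦ 2 * i`, the last three by `i ↦ 3 * i`. For Kunz points the last branch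
has `k 1 = 2 * k 3 + 1`, so its subtraction does not truncate. -/
def kunzStep (k : Fin 5 → ℕ) : Fin 5 → ℕ :=
  if k 4 < 2 * k 2 ∧ k 4 < k 1 + k 3 then ![0, k 1, k 2, k 3, k 4 + 1]
  else if k 4 < 2 * k 2 then ![0, k 2, k 4 + 1, k 1, k 3]
  else if k 4 = k 1 + k 3 then ![0, k 3 + 1, k 1, k 4, k 2]
  else if k 1 ≤ 2 * k 3 then ![0, k 3, k 1, k 4 + 1, k 2]
  else ![0, k 3 + 2, k 1 - 1, k 4, k 2]

/-- The left inverse of `kunzStep` on Kunz points: its conditions separate the images of the five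
branches of `kunzStep`, in the order second, first, fourth, third, fifth. -/
def kunzUnstep (k : Fin 5 → ℕ) : Fin 5 → ℕ :=
  if k 2 = k 3 + k 4 + 1 then ![0, k 3, k 1, k 4, k 2 - 1]
  else if k 3 < 2 * k 4 then ![0, k 1, k 2, k 3, k 4 - 1]
  else if k 3 = 2 * k 4 + 1 then ![0, k 2, k 4, k 1, k 3 - 1]
  else if k 1 + k 2 = k 3 + 1 then ![0, k 2, k 4, k 1 - 1, k 3]
  else ![0, k 2 + 1, k 4, k 1 - 2, k 3]

theorem mapsTo_kunzStep (g : ℕ) :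
    Set.MapsTo kunzStep (kunzPoints 5 g) (kunzPoints 5 (g + 1)) := by
  intro k hk
  simp only [kunzPoints, Set.mem_ofPred_eq, isKunz_five_iff, Fin.sum_univ_five] at hk ⊢
  unfold kunzStep
  split_ifs <;> simp <;> omega

theorem leftInvOn_kunzUnstep_kunzStep (g : ℕ) :
    Set.LeftInvOn kunzUnstep kunzStep (kunzPoints 5 g) := by
  rintro k ⟨hk, -⟩
  rw [isKunz_five_iff] at hk
  have hvec : ![0, k 1, k 2, k 3, k 4] = k := by
    ext i
    fin_cases i <;> simp [hk.1]
  unfold kunzStep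
  split_ifs with hraise hlow₂ hfacet hle
  · have hoff : k 2 ≠ k 3 + (k 4 + 1) + 1 := by omega
    have hlow : k 3 < 2 * (k 4 + 1) := by omega
    exact (if_neg hoff).trans <| (if_pos hlow).trans hvec
  · have hon : k 4 + 1 = k 1 + k 3 + 1 := by omega
    exact (if_pos hon).trans hvec
  · have hoff : k 1 ≠ k 4 + k 2 + 1 := by omega
    have hne : k 4 ≠ 2 * k 2 + 1 := by omega
    have hsum : k 3 + 1 + k 1 = k 4 + 1 := by omega
    exact (if_neg hoff).trans <| (if_neg hlow₂).trans <| (if_neg hne).trans <|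
      (if_pos hsum).trans hvec
  · have hoff : k 1 ≠ k 4 + 1 + k 2 + 1 := by omega
    have hlow : ¬ k 4 + 1 < 2 * k 2 := by omega
    have hon : k 4 + 1 = 2 * k 2 + 1 := by omega
    exact (if_neg hoff).trans <| (if_neg hlow).trans <| (if_pos hon).trans hvec
  · have hoff : k 1 - 1 ≠ k 4 + k 2 + 1 := by omega
    have hne : k 4 ≠ 2 * k 2 + 1 := by omega
    have hsum : k 3 + 2 + (k 1 - 1) ≠ k 4 + 1 := by omega
    have hvec' : ![0, k 1 - 1 + 1, k 2, k 3, k 4] = k := by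
      rwa [Nat.sub_add_cancel hk.2.1.1]
    exact (if_neg hoff).trans <| (if_neg hlow₂).trans <| (if_neg hne).trans <|
      (if_neg hsum).trans hvec'

/-- `#S(5,g) ≤ #S(5,g+1)` for every nonnegative integer `g`. -/
theorem statement19 (g : ℕ) : numSgps 5 g ≤ numSgps 5 (g + 1) := by
  rw [numSgps_eq_ncard_kunzPoints, numSgps_eq_ncard_kunzPoints]
  exact Set.ncard_le_ncard_of_injOn kunzStep (mapsTo_kunzStep g)
    (leftInvOn_kunzUnstep_kunzStep g).injOn (finite_kunzPoints 5 (g + 1))
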